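/- (Zlotnik's inequality.) Let T > 0 and let y, b ∈ W^{1,1}(0,T) satisfy y'(t) ≤ g(y(t)) + b'(t) for a.e. t ∈ [0,T] and y(0) = y⁰, where g ∈ C(ℝ) with g(ζ) → −∞ as ζ → +∞. Suppose there are constants N₀ ≥ 0 and N₁ ≥ 0 such that b(t₂) − b(t₁) ≤ N₀ + N₁(t₂ − t₁) for all 0 ≤ t₁ < t₂ ≤ T, and let ζ̄ be a constant such that g(ζ) ≤ −N₁ for all ζ ≥ ζ̄. Then y(t) ≤ max{y⁰, ζ̄} + N₀ < ∞ for all t ∈ [0,T]. -/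

import Mathlib

open MeasureTheory Set Filter

/-- **Zlotnik's inequality** (Lemma 2.2): if `y, b ∈ W^{1,1}(0,T)` satisfy
`y' ≤ g(y) + b'` a.e. on `[0,T]`, `g` is continuous with `g(ζ) → −∞` as
`ζ → +∞`, `b(t₂) − b(t₁) ≤ N₀ + N₁(t₂ − t₁)` for all `0 ≤ t₁ < t₂ ≤ T`, and
`g(ζ) ≤ −N₁` for all `ζ ≥ ζ̄`, then `y(t) ≤ max{y(0), ζ̄} + N₀` on `[0,T]`. -/
theorem zlotnik_inequality
    (T y0 N₀ N₁ ζbar : ℝ) (hT : 0 < T)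
    (y b y' b' g : ℝ → ℝ)
    (hg : Continuous g)
    (hginf : Filter.Tendsto g Filter.atTop Filter.atBot)
    (hy'int : IntervalIntegrable y' volume 0 T)
    (hb'int : IntervalIntegrable b' volume 0 T)
    (hyftc : ∀ t ∈ Set.Icc (0:ℝ) T, y t = y 0 + ∫ s in (0:ℝ)..t, y' s)
    (hbftc : ∀ t ∈ Set.Icc (0:ℝ) T, b t = b 0 + ∫ s in (0:ℝ)..t, b' s)
    (hy0 : y 0 = y0)
    (hineq : ∀ᵐ t ∂(volume.restrict (Set.Icc (0:ℝ) T)), y' t ≤ g (y t) + b' t)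
    (hN₀ : 0 ≤ N₀) (hN₁ : 0 ≤ N₁)
    (hb : ∀ t₁ t₂ : ℝ, 0 ≤ t₁ → t₁ < t₂ → t₂ ≤ T → b t₂ - b t₁ ≤ N₀ + N₁ * (t₂ - t₁))
    (hζ : ∀ ζ ≥ ζbar, g ζ ≤ -N₁) :
    ∀ t ∈ Set.Icc (0:ℝ) T, y t ≤ max y0 ζbar + N₀ := by
  intro t ht
  by_contra! hlt
  have hM : y t > max y0 ζbar := by linarith
  have hint : ∀ f : ℝ → ℝ, IntervalIntegrable f volume 0 T → ∀ u ∈ Icc (0:ℝ) T, ∀ v ∈ Icc (0:ℝ) T,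
      IntervalIntegrable f volume u v := by
    intro f hf u hu v hv
    refine hf.mono_set ?_
    rw [uIcc_of_le hT.le]
    exact uIcc_subset_Icc hu hv
  have hcont : ContinuousOn y (Icc 0 T) := by
    have h1 : ContinuousOn (fun x => ∫ s in (0:ℝ)..x, y' s) (uIcc 0 T) :=
      (hy'int.absolutelyContinuousOnInterval_intervalIntegral left_mem_uIcc).continuousOn
    rw [uIcc_of_le hT.le] at h1
    exact (continuousOn_const.add h1).congr (fun x hx => hyftc x hx)
  have hsub : Icc 0 t ⊆ Icc 0 T := Icc_subset_Icc_right ht.2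
  have hclosed : IsClosed (Icc 0 t ∩ y ⁻¹' Iic (max y0 ζbar)) :=
    (hcont.mono hsub).preimage_isClosed_of_isClosed isClosed_Icc isClosed_Iic
  have hcomp : IsCompact (Icc 0 t ∩ y ⁻¹' Iic (max y0 ζbar)) :=
    isCompact_Icc.of_isClosed_subset hclosed inter_subset_left
  have h0 : (0:ℝ) ∈ Icc (0:ℝ) T := ⟨le_rfl, hT.le⟩
  obtain ⟨s, ⟨hs, hys⟩, hmax⟩ := hcomp.exists_isGreatest
    ⟨0, ⟨le_rfl, ht.1⟩, by simp [hy0]⟩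
  have hys : y s ≤ max y0 ζbar := hys
  have hst : s < t := by
    rcases hs.2.lt_or_eq with h | h
    · exact h
    · subst h; linarith
  have hsT := hsub hs
  have hgt : ∀ x ∈ Ioc s t, max y0 ζbar < y x := by
    intro x hx
    by_contra! hle
    exact absurd (hmax ⟨⟨hs.1.trans hx.1.le, hx.2⟩, hle⟩) (not_le.2 hx.1)
  have hyst : y t - y s = ∫ x in s..t, y' x := by
    rw [hyftc t ht, hyftc s hsT, ← intervalIntegral.integral_interval_sub_left
      (hint _ hy'int 0 h0 t ht) (hint _ hy'int 0 h0 s hsT)]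
    ring
  have hbst : b t - b s = ∫ x in s..t, b' x := by
    rw [hbftc t ht, hbftc s hsT, ← intervalIntegral.integral_interval_sub_left
      (hint _ hb'int 0 h0 t ht) (hint _ hb'int 0 h0 s hsT)]
    ring
  have hbi := hint _ hb'int s hsT t ht
  have hle : ∫ x in s..t, y' x ≤ ∫ x in s..t, (-N₁ + b' x) := by
    rw [intervalIntegral.integral_of_le hst.le, intervalIntegral.integral_of_le hst.le]
    refine setIntegral_mono_on_ae (hint _ hy'int s hsT t ht).1
      (intervalIntegrable_const.add hbi).1 measurableSet_Ioc ?_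
    rw [ae_restrict_iff' measurableSet_Icc] at hineq
    filter_upwards [hineq] with x hx hxm
    have h1 := hx ⟨hs.1.trans hxm.1.le, hxm.2.trans ht.2⟩
    have h2 := hζ (y x) ((le_max_right _ _).trans (hgt x hxm).le)
    linarith
  rw [intervalIntegral.integral_add intervalIntegrable_const hbi,
    intervalIntegral.integral_const, smul_eq_mul] at hle
  have := hb s t hs.1 hst ht.2
  nlinarith
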